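/- There exists ϑ ∈ (0,1), depending only on λ and A*, such that for every L > 0 there is a constant C > 0 with the following property: for every sequence (T_i)_{i≥1} ⊂ 𝓜 with transfer operators ℒ_i and all ψ¹, ψ² ∈ 𝒟_L, one has ‖ℒ_k ⋯ ℒ_1(ψ¹ − ψ²)‖_{L¹(𝔪)} ≤ C ϑ^k for all k ≥ 0. -/

import Mathlib

open MeasureTheory Filter Topology Set UniformConvergence

noncomputable section

instance : Fact ((0:ℝ) < 1) := ⟨zero_lt_one⟩

/-- The circle `𝕊 = ℝ/ℤ`. -/
abbrev Circle1 : Type := AddCircle (1 : ℝ)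

/-- A `C²` expanding circle map with expansion `≥ lam` and `‖T''‖_∞ ≤ Astar`,
encoded by a lift `F : ℝ → ℝ` satisfying `F (x+1) = F x + deg`. -/
structure CM (lam Astar : ℝ) where
  F : ℝ → ℝ
  deg : ℤ
  lift_add_one : ∀ x : ℝ, F (x + 1) = F x + deg
  contDiff : ContDiff ℝ 2 F
  expanding : ∀ x : ℝ, lam ≤ deriv F x
  second_bound : ∀ x : ℝ, |deriv (deriv F) x| ≤ Astar

namespace CM

variable {lam Astar : ℝ}

/-- The induced map on the circle. -/
def toMap (T : CM lam Astar) : Circle1 → Circle1 :=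
  fun x => (↑(T.F ((AddCircle.equivIco 1 0 x : ℝ))) : Circle1)

/-- The derivative of `T`, as a function on the circle. -/
def dmap (T : CM lam Astar) : Circle1 → ℝ :=
  fun x => deriv T.F ((AddCircle.equivIco 1 0 x : ℝ))

end CM

/-- The `C¹` distance on the space of maps. -/
def dC1 {lam Astar : ℝ} (T₁ T₂ : CM lam Astar) : ℝ :=
  (⨆ x : Circle1, dist (T₁.toMap x) (T₂.toMap x)) + (⨆ x : Circle1, |T₁.dmap x - T₂.dmap x|)

/-- The transfer operator `ℒ_T h (x) = ∑_{T y = x} h y / T' y`. -/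
def transfer {lam Astar : ℝ} (T : CM lam Astar) (h : Circle1 → ℝ) : Circle1 → ℝ :=
  fun x => ∑' y : {y : Circle1 // T.toMap y = x}, h y / T.dmap y

/-- Iterated transfer operators `ℒ_k ⋯ ℒ_1` of the sequence `T_1, T_2, …` (`Ts i = T_i`). -/
def transferIter {lam Astar : ℝ} (Ts : ℕ → CM lam Astar) : ℕ → (Circle1 → ℝ) → (Circle1 → ℝ)
  | 0, h => h
  | (k+1), h => transfer (Ts (k+1)) (transferIter Ts k h)

/-- Composition `T_k ∘ ⋯ ∘ T_1` as circle maps. -/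
def mapIter {lam Astar : ℝ} (Ts : ℕ → CM lam Astar) : ℕ → Circle1 → Circle1
  | 0 => id
  | (k+1) => (Ts (k+1)).toMap ∘ mapIter Ts k

/-- Composition of the lifts `F_k ∘ ⋯ ∘ F_1`. -/
def liftIter {lam Astar : ℝ} (Ts : ℕ → CM lam Astar) : ℕ → ℝ → ℝ
  | 0 => id
  | (k+1) => (Ts (k+1)).F ∘ liftIter Ts k

/-- A real representative of `z`. -/
def zrep (z : Circle1) : ℝ := (AddCircle.equivIco 1 0 z : ℝ)

/-- The coordinate on the cut circle `J_z = 𝕊 ∖ {z}`. -/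
def arcCoord (z x : Circle1) : ℝ := ((AddCircle.equivIoc 1 (zrep z) x : ℝ))

/-- `|x − y|_z`: the length of the subarc of `J_z` connecting `x` and `y`. -/
def arcDist (z x y : Circle1) : ℝ := |arcCoord z x - arcCoord z y|

/-- `g` is Lipschitz on `J_z = 𝕊 ∖ {z}` with constant `L`. -/
def LipOnArc (z : Circle1) (L : ℝ) (g : Circle1 → ℝ) : Prop :=
  ∀ x y : Circle1, x ≠ z → y ≠ z → |g x - g y| ≤ L * arcDist z x y

/-- A probability density w.r.t. the Haar–Lebesgue measure `𝔪` on the circle. -/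
def IsProbDensity (ψ : Circle1 → ℝ) : Prop :=
  Integrable ψ volume ∧ (∫ x : Circle1, ψ x) = 1 ∧ ∀ x, 0 ≤ ψ x

/-- The class `𝒟_L`: positive probability densities whose logarithm is Lipschitz
with constant `L` on `J_z` for some `z`. -/
def memD (L : ℝ) (ψ : Circle1 → ℝ) : Prop :=
  IsProbDensity ψ ∧ (∀ x, 0 < ψ x) ∧ ∃ z : Circle1, LipOnArc z L (fun x => Real.log (ψ x))

/-- The `L¹(𝔪)` norm. -/
def l1norm (h : Circle1 → ℝ) : ℝ := ∫ x : Circle1, |h x|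

/-- The supremum norm. -/
def supNorm (h : Circle1 → ℝ) : ℝ := ⨆ x : Circle1, |h x|

/-- The Lipschitz constant of `h` (w.r.t. the metric of the circle). -/
def lipConst (h : Circle1 → ℝ) : ℝ :=
  sInf {L : ℝ | 0 ≤ L ∧ ∀ x y : Circle1, |h x - h y| ≤ L * dist x y}

/-- The Lipschitz norm `‖h‖_Lip = Lip(h) + ‖h‖_∞`. -/
def lipNorm (h : Circle1 → ℝ) : ℝ := lipConst h + supNorm h

/-- `ρ` is the density of the SRB measure of `T`: the density of a `T`-invariant
probability measure equivalent to `𝔪`. -/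
def IsSRBDensity {lam Astar : ℝ} (T : CM lam Astar) (ρ : Circle1 → ℝ) : Prop :=
  IsProbDensity ρ ∧ (∀ᵐ x : Circle1, 0 < ρ x) ∧
    Measure.map T.toMap (volume.withDensity (fun x => ENNReal.ofReal (ρ x))) =
      volume.withDensity (fun x => ENNReal.ofReal (ρ x))

section QDS

variable {lam Astar : ℝ}

/-- `x_{n,k} = T_{n,k} ∘ ⋯ ∘ T_{n,1}` for a triangular array. -/
def arrIter (Tarr : ℕ → ℕ → CM lam Astar) (n : ℕ) : ℕ → Circle1 → Circle1
  | 0 => id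
  | (k+1) => (Tarr n (k+1)).toMap ∘ arrIter Tarr n k

/-- `ℒ_{n,k} ⋯ ℒ_{n,1}` for a triangular array. -/
def arrTransfer (Tarr : ℕ → ℕ → CM lam Astar) (n : ℕ) : ℕ → (Circle1 → ℝ) → (Circle1 → ℝ)
  | 0, h => h
  | (k+1), h => transfer (Tarr n (k+1)) (arrTransfer Tarr n k h)

/-- `f_{n,k} = f ∘ T_{n,k} ∘ ⋯ ∘ T_{n,1}` evaluated at `x`. -/
def fnk (Tarr : ℕ → ℕ → CM lam Astar) (f : Circle1 → ℝ) (n k : ℕ) (x : Circle1) : ℝ :=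
  f (arrIter Tarr n k x)

/-- `ζₙ(x,t) = n⁻¹ (∑_{k<⌊nt⌋} f_{n,k}(x) + {nt}·f_{n,⌊nt⌋}(x))`. -/
def zetaP (Tarr : ℕ → ℕ → CM lam Astar) (f : Circle1 → ℝ) (n : ℕ) (x : Circle1) (t : ℝ) : ℝ :=
  (n : ℝ)⁻¹ * ((∑ k ∈ Finset.range ⌊(n : ℝ) * t⌋₊, fnk Tarr f n k x) +
    Int.fract ((n : ℝ) * t) * fnk Tarr f n ⌊(n : ℝ) * t⌋₊ x)

/-- `ξₙ(x,t) = √n ζₙ(x,t) − √n μ(ζₙ(·,t))` for a measure `μ`. -/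
def xiP (Tarr : ℕ → ℕ → CM lam Astar) (f : Circle1 → ℝ) (μ : Measure Circle1) (n : ℕ)
    (x : Circle1) (t : ℝ) : ℝ :=
  Real.sqrt n * zetaP Tarr f n x t - Real.sqrt n * ∫ y, zetaP Tarr f n y t ∂μ

/-- The Hölder continuity (exponent `η`) of the curve `γ` on `[0,1]`, w.r.t. `d_{C¹}`. -/
def HolderCurve (η : ℝ) (γ : ℝ → CM lam Astar) : Prop :=
  ∃ H : ℝ, ∀ s ∈ Icc (0:ℝ) 1, ∀ t ∈ Icc (0:ℝ) 1, dC1 (γ s) (γ t) ≤ H * |s - t| ^ η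

/-- The convergence-rate condition `sup_n n^η sup_t d_{C¹}(T_{n,⌊nt⌋}, γ_t) < ∞`. -/
def ArrayApprox (η : ℝ) (γ : ℝ → CM lam Astar) (Tarr : ℕ → ℕ → CM lam Astar) : Prop :=
  ∃ M : ℝ, ∀ n : ℕ, 1 ≤ n → ∀ t ∈ Icc (0:ℝ) 1,
    (n : ℝ) ^ η * dC1 (Tarr n ⌊(n : ℝ) * t⌋₊) (γ t) ≤ M

end QDS

/-- The path space: functions `[0,1] → ℝ` with the topology of uniform convergence;
continuous paths (with the supremum metric) embed isometrically. -/
abbrev PathSpace : Type := (Icc (0:ℝ) 1) →ᵤ ℝ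

instance : MeasurableSpace PathSpace := borel PathSpace

/-- A function `[0,1] → ℝ` (given as a function on `ℝ`) as a point of the path space. -/
def pathOf (g : ℝ → ℝ) : PathSpace := UniformFun.ofFun (fun t => g t)

/-- Evaluation of a path at time `t` (clamped to `[0,1]`). -/
def evalPath (t : ℝ) (ω : PathSpace) : ℝ := UniformFun.toFun ω (projIcc 0 1 zero_le_one t)


section Extra

variable {lam Astar : ℝ}

/-- `μ(ζₙ(·,t))` for the measure with density `ρ` w.r.t. `𝔪`. -/
def zetaMean (Tarr : ℕ → ℕ → CM lam Astar) (f : Circle1 → ℝ) (ρ : Circle1 → ℝ)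
    (n : ℕ) (t : ℝ) : ℝ :=
  ∫ y : Circle1, zetaP Tarr f n y t * ρ y

/-- `𝔪(ζₙ(·,t))`, the mean w.r.t. the Lebesgue measure. -/
def zetaMeanM (Tarr : ℕ → ℕ → CM lam Astar) (f : Circle1 → ℝ) (n : ℕ) (t : ℝ) : ℝ :=
  ∫ y : Circle1, zetaP Tarr f n y t

/-- `ξₙ(x,t) = √n ζₙ(x,t) − √n μ(ζₙ(·,t))`, where `μ` has density `ρ`. -/
def xiD (Tarr : ℕ → ℕ → CM lam Astar) (f : Circle1 → ℝ) (ρ : Circle1 → ℝ)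
    (n : ℕ) (x : Circle1) (t : ℝ) : ℝ :=
  Real.sqrt n * zetaP Tarr f n x t - Real.sqrt n * zetaMean Tarr f ρ n t

end Extra

/-- The σ-algebra `𝔉_t` on the path space, generated by the evaluations at times `s ∈ [0,t]`. -/
def pathFiltration (t : ℝ) : MeasurableSpace PathSpace :=
  ⨆ (s : ℝ) (_ : 0 ≤ s ∧ s ≤ t), MeasurableSpace.comap (evalPath s) (borel ℝ)

/-- The process `M_t(ω) = A(ω(t)) − A(ω(0)) − ½∫₀ᵗ σ̂ₛ²·A''(ω(s)) ds`. -/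
def MGproc (σ2 : ℝ → ℝ) (A : ℝ → ℝ) (t : ℝ) (ω : PathSpace) : ℝ :=
  A (evalPath t ω) - A (evalPath 0 ω) -
    (1/2) * ∫ s in (0:ℝ)..t, σ2 s * deriv (deriv A) (evalPath s ω)

/-- `P` solves the martingale problem on `C⁰([0,1],ℝ)` for the generator `½σ̂ₜ² d²/dx²`,
started at `0`:  `P` is a probability measure, concentrated on continuous paths starting at `0`,
and for every `A ∈ C_c^∞(ℝ)` the process `MGproc σ2 A` is a `P`-martingale w.r.t. the
natural filtration `𝔉_t`.  -/
def SolvesMartingaleProblem (σ2 : ℝ → ℝ) (P : Measure PathSpace) : Prop :=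
  IsProbabilityMeasure P ∧
  P {ω : PathSpace | evalPath 0 ω = 0} = 1 ∧
  P {ω : PathSpace | Continuous (UniformFun.toFun ω)} = 1 ∧
  ∀ A : ℝ → ℝ, ContDiff ℝ (⊤ : ℕ∞) A → HasCompactSupport A →
    (∀ t ∈ Icc (0:ℝ) 1, Integrable (MGproc σ2 A t) P) ∧
    (∀ t ∈ Icc (0:ℝ) 1, @Measurable PathSpace ℝ (pathFiltration t) _ (MGproc σ2 A t)) ∧
    (∀ s ∈ Icc (0:ℝ) 1, ∀ t ∈ Icc (0:ℝ) 1, s ≤ t →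
      P[MGproc σ2 A t | pathFiltration s] =ᵐ[P] MGproc σ2 A s)

end


/-!
Write `ψ₁ - ψ₂` as a difference of two densities of equal mass, each log-Lipschitz on the circle cut
at some point. A transfer operator preserves mass, moves the cut to its image, and multiplies the
log-Lipschitz constant by `1 / lam` up to a distortion of size `Astar / lam ^ 2`; so the constants
come arbitrarily close to the fixed point of an affine contraction. Once they are within `1` of it,
expansion leaves room to relax them by a fixed amount at every step: the same constant function,
carrying a fixed fraction of the mass, can be removed from both densities. The difference does not
change while the mass decays geometrically, and the `L¹` norm of the difference is at most twice the
mass.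
-/

section LogLipschitzOn

variable {α β : Type*} [PseudoMetricSpace α] [PseudoMetricSpace β]

/-- `f` is nonnegative on `s` and multiplicatively Lipschitz there: where `f > 0` this says that
`log f` is `L`-Lipschitz. Stated without the logarithm, the condition is visibly preserved by
sums and allows `f` to vanish. -/
structure LogLipschitzOn (L : ℝ) (f : α → ℝ) (s : Set α) : Prop where
  nonneg : ∀ ⦃x⦄, x ∈ s → 0 ≤ f x
  le_exp_mul : ∀ ⦃x⦄, x ∈ s → ∀ ⦃y⦄, y ∈ s → f x ≤ Real.exp (L * dist x y) * f y

namespace LogLipschitzOn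

variable {L M : ℝ} {f g : α → ℝ} {s : Set α}

lemma of_abs_log_sub_log_le (hpos : ∀ x ∈ s, 0 < f x)
    (hlog : ∀ x ∈ s, ∀ y ∈ s, |Real.log (f x) - Real.log (f y)| ≤ L * dist x y) :
    LogLipschitzOn L f s where
  nonneg x hx := (hpos x hx).le
  le_exp_mul x hx y hy := by
    calc f x = Real.exp (Real.log (f x)) := (Real.exp_log (hpos x hx)).symm
      _ ≤ Real.exp (L * dist x y + Real.log (f y)) := by
        gcongr
        linarith [le_abs_self (Real.log (f x) - Real.log (f y)), hlog x hx y hy]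
      _ = Real.exp (L * dist x y) * f y := by rw [Real.exp_add, Real.exp_log (hpos y hy)]

lemma inv_of_abs_sub_le {c : ℝ} (hc : 0 < c) (hf : ∀ x ∈ s, c ≤ f x)
    (hlip : ∀ x ∈ s, ∀ y ∈ s, |f x - f y| ≤ L * dist x y) :
    LogLipschitzOn (L / c) (fun x => (f x)⁻¹) s where
  nonneg x hx := inv_nonneg.2 (hc.le.trans (hf x hx))
  le_exp_mul x hx y hy := by
    have hfx : 0 < f x := hc.trans_le (hf x hx)
    have hfy : 0 < f y := hc.trans_le (hf y hy)
    have hLd : 0 ≤ L * dist x y := (abs_nonneg _).trans (hlip x hx y hy)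
    rw [← div_eq_mul_inv, le_div_iff₀ hfy, inv_mul_le_iff₀ hfx]
    calc f y ≤ f x + L * dist x y := by linarith [neg_le_of_abs_le (hlip x hx y hy)]
      _ = f x + c * (L / c * dist x y) := by field_simp
      _ ≤ f x + f x * (L / c * dist x y) := by
        have : 0 ≤ L / c * dist x y := by rw [div_mul_eq_mul_div]; positivity
        gcongr
        exact hf x hx
      _ = f x * (L / c * dist x y + 1) := by ring
      _ ≤ f x * Real.exp (L / c * dist x y) := by gcongr; exact Real.add_one_le_exp _

lemma mono (h : LogLipschitzOn L f s) (hLM : L ≤ M) : LogLipschitzOn M f s where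
  nonneg := h.nonneg
  le_exp_mul x hx y hy := by
    have := h.nonneg hy
    exact (h.le_exp_mul hx hy).trans (by gcongr)

lemma mul (hf : LogLipschitzOn L f s) (hg : LogLipschitzOn M g s) :
    LogLipschitzOn (L + M) (fun x => f x * g x) s where
  nonneg x hx := mul_nonneg (hf.nonneg hx) (hg.nonneg hx)
  le_exp_mul x hx y hy := by
    calc f x * g x ≤ Real.exp (L * dist x y) * f y * (Real.exp (M * dist x y) * g y) :=
          mul_le_mul (hf.le_exp_mul hx hy) (hg.le_exp_mul hx hy) (hg.nonneg hx)
            (mul_nonneg (Real.exp_nonneg _) (hf.nonneg hy))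
      _ = Real.exp ((L + M) * dist x y) * (f y * g y) := by rw [add_mul, Real.exp_add]; ring

lemma comp (hf : LogLipschitzOn L f s) (hL : 0 ≤ L) {K : ℝ} {φ : β → α} {t : Set β}
    (hφ : MapsTo φ t s) (hlip : ∀ x ∈ t, ∀ y ∈ t, dist (φ x) (φ y) ≤ K * dist x y) :
    LogLipschitzOn (L * K) (fun x => f (φ x)) t where
  nonneg x hx := hf.nonneg (hφ hx)
  le_exp_mul x hx y hy := by
    have := hf.nonneg (hφ hy)
    refine (hf.le_exp_mul (hφ hx) (hφ hy)).trans ?_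
    rw [mul_assoc L]
    gcongr
    exact hlip x hx y hy

lemma sum {ι : Type*} {t : Finset ι} {f : ι → α → ℝ} (h : ∀ i ∈ t, LogLipschitzOn L (f i) s) :
    LogLipschitzOn L (fun x => ∑ i ∈ t, f i x) s where
  nonneg x hx := Finset.sum_nonneg fun i hi => (h i hi).nonneg hx
  le_exp_mul x hx y hy := by
    rw [Finset.mul_sum]
    exact Finset.sum_le_sum fun i hi => (h i hi).le_exp_mul hx hy

lemma sub_const (h : LogLipschitzOn L f s) (hL : 0 ≤ L) (hLM : L < M) {c : ℝ}
    (hc : ∀ x ∈ s, c ≤ (1 - L / M) * f x) : LogLipschitzOn M (fun x => f x - c) s := by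
  have hM : 0 < M := hL.trans_lt hLM
  set t := L / M
  have ht : 0 ≤ t := by positivity
  have ht' : 0 ≤ 1 - t := sub_nonneg.2 ((div_le_one hM).2 hLM.le)
  refine ⟨fun x hx => ?_, fun x hx y hy => ?_⟩
  · linarith [hc x hx, mul_nonneg ht (h.nonneg hx)]
  · have hE : 1 ≤ Real.exp (M * dist x y) := Real.one_le_exp (by positivity)
    have hconv : Real.exp (L * dist x y) ≤ t * Real.exp (M * dist x y) + (1 - t) := by
      have := convexOn_exp.2 (mem_univ (M * dist x y)) (mem_univ 0) ht ht' (by ring)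
      simpa [t, ← mul_assoc, div_mul_cancel₀ _ hM.ne'] using this
    set E := Real.exp (M * dist x y)
    calc f x - c ≤ (t * E + (1 - t)) * f y - c :=
          sub_le_sub_right ((h.le_exp_mul hx hy).trans
            (mul_le_mul_of_nonneg_right hconv (h.nonneg hy))) c
      _ = E * (f y - c) + (E - 1) * (c - (1 - t) * f y) := by ring
      _ ≤ E * (f y - c) := add_le_of_nonpos_right
          (mul_nonpos_of_nonneg_of_nonpos (sub_nonneg.2 hE) (sub_nonpos.2 (hc y hy)))

end LogLipschitzOn

end LogLipschitzOn

section Calculus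

lemma surjective_of_pos_le_deriv {f : ℝ → ℝ} {c : ℝ} (hc : 0 < c) (hf : Differentiable ℝ f)
    (hderiv : ∀ x, c ≤ deriv f x) : Function.Surjective f := by
  have growth := mul_sub_le_image_sub_of_le_deriv hf hderiv
  refine hf.continuous.surjective
    (tendsto_atTop_mono' atTop (f₁ := fun x => c * x + f 0) ?_
      (tendsto_atTop_add_const_right _ _ (tendsto_id.const_mul_atTop hc)))
    (tendsto_atBot_mono' atBot (f₁ := fun x => c * x + f 0) ?_
      (tendsto_atBot_add_const_right _ _ (tendsto_id.const_mul_atBot hc)))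
  · filter_upwards [eventually_ge_atTop 0] with x hx
    linarith [growth hx]
  · filter_upwards [eventually_le_atBot 0] with x hx
    linarith [growth hx]

variable {E : Type*} [NormedAddCommGroup E] {w : ℝ → E} {b : ℝ} {n : ℕ}

lemma intervalIntegrable_comp_add_natCast (hw : IntegrableOn w (Ioc b (b + n))) {j : ℕ}
    (hj : j < n) : IntervalIntegrable (fun t => w (t + j)) volume b (b + 1) := by
  have hjn : ((j + 1 : ℕ) : ℝ) ≤ n := by exact_mod_cast hj
  push_cast at hjn
  have hsub : Ioc (b + j) (b + 1 + j) ⊆ Ioc b (b + n) :=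
    Ioc_subset_Ioc (by linarith [j.cast_nonneg (α := ℝ)]) (by linarith)
  have hint := (intervalIntegrable_iff_integrableOn_Ioc_of_le (by linarith)).2 (hw.mono_set hsub)
  simpa using hint.comp_add_right (j : ℝ)

lemma integral_sum_comp_add_natCast [NormedSpace ℝ E] (hw : IntegrableOn w (Ioc b (b + n))) :
    ∫ t in b..b + 1, ∑ j ∈ Finset.range n, w (t + j) = ∫ s in b..b + n, w s := by
  rw [intervalIntegral.integral_finsetSum fun j hj =>
    intervalIntegrable_comp_add_natCast hw (Finset.mem_range.1 hj)]
  have hadj := intervalIntegral.sum_integral_adjacent_intervals (f := w) (μ := volume)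
    (a := fun j : ℕ => b + j) (n := n) fun j hj => by
      have := (intervalIntegrable_comp_add_natCast hw hj).comp_sub_right (j : ℝ)
      simpa [add_assoc, add_comm (1 : ℝ)] using this
  rw [Nat.cast_zero, add_zero] at hadj
  rw [← hadj]
  refine Finset.sum_congr rfl fun j _ => ?_
  rw [intervalIntegral.integral_comp_add_right, Nat.cast_succ, add_right_comm, add_assoc]

end Calculus

section Circle

variable {p : ℝ} [Fact (0 < p)]

lemma integrable_iff_integrableOn_Ioc_coe {E : Type*} [NormedAddCommGroup E]
    (f : AddCircle p → E) (a : ℝ) :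
    Integrable f ↔ IntegrableOn (fun t : ℝ => f t) (Ioc a (a + p)) := by
  rw [integrableOn_iff_comap_subtypeVal measurableSet_Ioc,
    ← (AddCircle.measurePreserving_equivIoc (T := p) (a := a)).integrable_comp_emb
      (AddCircle.measurableEquivIoc p a).measurableEmbedding]
  refine iff_of_eq (congrArg (Integrable · volume) (funext fun x => ?_))
  exact congrArg f AddCircle.coe_equivIoc.symm

lemma ae_of_forall_mem_Ioo_coe {P : AddCircle p → Prop} {a : ℝ}
    (h : ∀ u ∈ Ioo a (a + p), P u) : ∀ᵐ x, P x := by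
  have hne : ∀ᵐ x : AddCircle p, x ≠ a := by
    have := AddCircle.volume_closedBall (T := p) (x := (a : AddCircle p)) 0
    simpa [ae_iff] using this
  filter_upwards [hne] with x hx
  have hcoe : ((AddCircle.equivIoc p a x : ℝ) : AddCircle p) = x := AddCircle.coe_equivIoc
  have hmem := (AddCircle.equivIoc p a x).2
  rw [← hcoe] at hx ⊢
  refine h _ ⟨hmem.1, hmem.2.lt_of_ne fun heq => hx ?_⟩
  rw [heq, AddCircle.coe_add_period]

lemma coe_eq_coe_iff_exists_add_intCast {u v : ℝ} :
    (u : Circle1) = v ↔ ∃ m : ℤ, u = v + m := by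
  rw [← sub_eq_zero, ← AddCircle.coe_sub, AddCircle.coe_eq_zero_iff]
  simp only [zsmul_one, eq_comm (b := u - v), sub_eq_iff_eq_add']

lemma LogLipschitzOn.integral_le_exp_mul {L a u : ℝ} {φ : Circle1 → ℝ}
    (h : LogLipschitzOn L (fun t : ℝ => φ t) (Ioo a (a + 1))) (hL : 0 ≤ L)
    (hu : u ∈ Ioo a (a + 1)) : ∫ x, φ x ≤ Real.exp L * φ u := by
  have hbound : ∀ᵐ x, φ x ≤ Real.exp L * φ u := ae_of_forall_mem_Ioo_coe (a := a) fun v hv => by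
    have hdist : dist v u ≤ 1 := abs_le.2 ⟨by linarith [hv.1, hu.2], by linarith [hv.2, hu.1]⟩
    have := h.nonneg hu
    refine (h.le_exp_mul hv hu).trans ?_
    gcongr
    exact mul_le_of_le_one_right hL hdist
  calc ∫ x, φ x ≤ ∫ _x : Circle1, Real.exp L * φ u :=
        integral_mono_of_nonneg (ae_of_forall_mem_Ioo_coe h.nonneg) (integrable_const _) hbound
    _ = Real.exp L * φ u := by simp [measureReal_def, AddCircle.measure_univ]

lemma LipOnArc.abs_sub_le {z : Circle1} {L u v : ℝ} {g : Circle1 → ℝ} (h : LipOnArc z L g)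
    (hu : u ∈ Ioo (zrep z) (zrep z + 1)) (hv : v ∈ Ioo (zrep z) (zrep z + 1)) :
    |g u - g v| ≤ L * |u - v| := by
  have hz : ((zrep z : ℝ) : Circle1) = z := AddCircle.coe_equivIco
  have coord : ∀ w ∈ Ioo (zrep z) (zrep z + 1), arcCoord z w = w := fun w hw => by
    rw [arcCoord, AddCircle.equivIoc_coe_eq (Ioo_subset_Ioc_self hw)]
  have ne : ∀ w ∈ Ioo (zrep z) (zrep z + 1), (w : Circle1) ≠ z := fun w hw heq => by
    rw [← hz, AddCircle.coe_eq_coe_iff_of_mem_Ico (Ioo_subset_Ico_self hw)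
      ⟨le_rfl, lt_add_one _⟩] at heq
    exact hw.1.ne' heq
  simpa [arcDist, coord u hu, coord v hv] using h u v (ne u hu) (ne v hv)

end Circle

namespace CM

variable {lam Astar : ℝ} (T : CM lam Astar)

lemma differentiable_F : Differentiable ℝ T.F := T.contDiff.differentiable two_ne_zero

lemma deriv_F_pos (hlam : 0 < lam) (x : ℝ) : 0 < deriv T.F x := hlam.trans_le (T.expanding x)

include T in
lemma Astar_nonneg : 0 ≤ Astar := (abs_nonneg _).trans (T.second_bound 0)

lemma F_add_intCast (x : ℝ) (m : ℤ) : T.F (x + m) = T.F x + m * T.deg := by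
  simpa using AddConstMapClass.map_add_int'
    (⟨T.F, T.lift_add_one⟩ : AddConstMap ℝ ℝ 1 (T.deg : ℝ)) x m

lemma deriv_F_add_intCast (x : ℝ) (m : ℤ) : deriv T.F (x + m) = deriv T.F x := by
  rw [← deriv_comp_add_const, funext (T.F_add_intCast · m), deriv_add_const]

lemma abs_deriv_F_sub_le (x y : ℝ) : |deriv T.F x - deriv T.F y| ≤ Astar * |x - y| :=
  convex_univ.norm_image_sub_le_of_norm_deriv_le
    (fun x _ => T.contDiff.differentiable_deriv_two x) (fun x _ => T.second_bound x)
    (mem_univ y) (mem_univ x)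

lemma toMap_coe (u : ℝ) : T.toMap u = T.F u := by
  obtain ⟨m, hm⟩ := coe_eq_coe_iff_exists_add_intCast.1
    (AddCircle.coe_equivIco (a := (0 : ℝ)) (y := (u : Circle1)))
  rw [toMap, hm, F_add_intCast, coe_eq_coe_iff_exists_add_intCast]
  exact ⟨m * T.deg, by push_cast; rfl⟩

lemma dmap_coe (u : ℝ) : T.dmap u = deriv T.F u := by
  obtain ⟨m, hm⟩ := coe_eq_coe_iff_exists_add_intCast.1
    (AddCircle.coe_equivIco (a := (0 : ℝ)) (y := (u : Circle1)))
  rw [dmap, hm, deriv_F_add_intCast]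

variable (hlam : 0 < lam)
include hlam

lemma strictMono_F : StrictMono T.F := strictMono_of_deriv_pos (T.deriv_F_pos hlam)

lemma natCast_toNat_deg : ((T.deg.toNat : ℕ) : ℝ) = T.deg := by
  have hF := T.strictMono_F hlam (lt_add_one 0)
  rw [T.lift_add_one] at hF
  have hdeg : (0 : ℝ) < T.deg := by linarith
  exact_mod_cast Int.toNat_of_nonneg (Int.cast_pos.1 hdeg).le

/-- The lift as an order isomorphism of `ℝ`; its inverse provides all the inverse branches of the
circle map. -/
noncomputable def liftIso : ℝ ≃o ℝ :=
  (T.strictMono_F hlam).orderIsoOfSurjective T.F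
    (surjective_of_pos_le_deriv hlam T.differentiable_F T.expanding)

lemma liftIso_apply (u : ℝ) : T.liftIso hlam u = T.F u := rfl

lemma F_liftIso_symm (s : ℝ) : T.F ((T.liftIso hlam).symm s) = s :=
  (T.liftIso hlam).apply_symm_apply s

lemma hasDerivAt_liftIso_symm (s : ℝ) :
    HasDerivAt (T.liftIso hlam).symm (deriv T.F ((T.liftIso hlam).symm s))⁻¹ s :=
  .of_local_left_inverse (T.liftIso hlam).symm.continuous.continuousAt
    (T.differentiable_F _).hasDerivAt (T.deriv_F_pos hlam _).ne'
    (.of_forall (T.F_liftIso_symm hlam))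

lemma dist_liftIso_symm_le (s t : ℝ) :
    dist ((T.liftIso hlam).symm s) ((T.liftIso hlam).symm t) ≤ lam⁻¹ * dist s t := by
  wlog hts : t ≤ s generalizing s t
  · simpa only [dist_comm] using this t s (le_of_not_ge hts)
  have hmono := (T.liftIso hlam).symm.monotone hts
  have hgrowth := mul_sub_le_image_sub_of_le_deriv T.differentiable_F T.expanding hmono
  rw [F_liftIso_symm, F_liftIso_symm] at hgrowth
  rw [Real.dist_eq, Real.dist_eq, abs_of_nonneg (sub_nonneg.2 hmono),
    abs_of_nonneg (sub_nonneg.2 hts)]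
  exact (le_inv_mul_iff₀ hlam).2 hgrowth

/-- The density `s ↦ (F' (F⁻¹ s))⁻¹ * ψ (F⁻¹ s)` on `ℝ` of the image under the lift `F` of the
measure with the periodic density `ψ`. The transfer operator sums it over the translates
`t, t + 1, …, t + deg - 1` of a point. -/
noncomputable def liftDensity (ψ : Circle1 → ℝ) (s : ℝ) : ℝ :=
  (deriv T.F ((T.liftIso hlam).symm s))⁻¹ * ψ ((T.liftIso hlam).symm s : ℝ)

lemma bijOn_fiber (t : ℝ) :
    BijOn (fun j : ℕ => (((T.liftIso hlam).symm (t + j) : ℝ) : Circle1))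
      (Finset.range T.deg.toNat) {y | T.toMap y = t} := by
  set G := (T.liftIso hlam).symm
  have hFG : ∀ s, T.F (G s) = s := T.F_liftIso_symm hlam
  have hFt : T.F (G t + 1) = t + T.deg.toNat := by
    rw [T.lift_add_one, hFG, natCast_toNat_deg T hlam]
  have hmem : ∀ j ∈ Finset.range T.deg.toNat, G (t + j) ∈ Ico (G t) (G t + 1) := fun j hj => by
    refine ⟨G.monotone (by simp), (T.strictMono_F hlam).lt_iff_lt.1 ?_⟩
    rw [hFG, hFt]
    gcongr
    exact Finset.mem_range.1 hj
  refine ⟨fun j _ => ?_, fun i hi j hj hij => ?_, fun y hy => ?_⟩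
  · simp only [mem_ofPred_eq, toMap_coe, hFG]
    exact coe_eq_coe_iff_exists_add_intCast.2 ⟨j, by simp⟩
  · have := (AddCircle.coe_eq_coe_iff_of_mem_Ico (hmem i hi) (hmem j hj)).1 hij
    simpa using G.injective this
  · obtain ⟨⟨u, hu⟩, rfl⟩ := (AddCircle.equivIco 1 (G t)).symm.surjective y
    change T.toMap (u : Circle1) = t at hy
    obtain ⟨m, hm⟩ := coe_eq_coe_iff_exists_add_intCast.1 ((T.toMap_coe u).symm.trans hy)
    have hm0 : 0 ≤ m := by
      have := (T.strictMono_F hlam).monotone hu.1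
      rw [hFG, hm] at this
      exact_mod_cast (le_add_iff_nonneg_right t).1 this
    lift m to ℕ using hm0
    have hmlt : m < T.deg.toNat := by
      have := T.strictMono_F hlam hu.2
      rw [hFt, hm] at this
      exact_mod_cast lt_of_add_lt_add_left this
    refine ⟨m, by simpa using hmlt, ?_⟩
    change ((G (t + m) : ℝ) : Circle1) = u
    rw [← Int.cast_natCast, ← hm]
    exact congrArg _ ((T.liftIso hlam).symm_apply_apply u)

lemma transfer_coe (ψ : Circle1 → ℝ) (t : ℝ) :
    transfer T ψ t = ∑ j ∈ Finset.range T.deg.toNat, T.liftDensity hlam ψ (t + j) := by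
  rw [← Finset.tsum_subtype']
  refine ((T.bijOn_fiber hlam t).equiv.tsum_eq fun y => ψ y / T.dmap y).symm.trans
    (tsum_congr fun j => ?_)
  change ψ ((T.liftIso hlam).symm (t + j) : ℝ) / T.dmap ((T.liftIso hlam).symm (t + j) : ℝ) = _
  rw [dmap_coe, div_eq_inv_mul, liftDensity]

lemma transfer_sub (f g : Circle1 → ℝ) : transfer T (f - g) = transfer T f - transfer T g := by
  ext x
  obtain ⟨t, rfl⟩ := QuotientAddGroup.mk_surjective x
  simp only [Pi.sub_apply, T.transfer_coe hlam, ← Finset.sum_sub_distrib, liftDensity, mul_sub]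

lemma image_liftIso_symm_Ioc (a : ℝ) :
    (T.liftIso hlam).symm '' Ioc (T.F a) (T.F a + T.deg.toNat) = Ioc a (a + 1) := by
  rw [OrderIso.image_Ioc, natCast_toNat_deg T hlam, ← T.lift_add_one, ← T.liftIso_apply hlam,
    ← T.liftIso_apply hlam, OrderIso.symm_apply_apply, OrderIso.symm_apply_apply]

lemma integrableOn_liftDensity {ψ : Circle1 → ℝ} (hψ : Integrable ψ) (a : ℝ) :
    IntegrableOn (T.liftDensity hlam ψ) (Ioc (T.F a) (T.F a + T.deg.toNat)) := by
  exact (integrableOn_image_iff_integrableOn_deriv_smul_of_monotoneOn measurableSet_Ioc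
    (fun s _ => (T.hasDerivAt_liftIso_symm hlam s).hasDerivWithinAt)
    ((T.liftIso hlam).symm.monotone.monotoneOn _) fun u : ℝ => ψ u).1
    (by rw [image_liftIso_symm_Ioc]; exact (integrable_iff_integrableOn_Ioc_coe ψ a).1 hψ)

lemma integral_liftDensity (ψ : Circle1 → ℝ) (a : ℝ) :
    ∫ s in T.F a..T.F a + T.deg.toNat, T.liftDensity hlam ψ s = ∫ x, ψ x := by
  have := integral_image_eq_integral_deriv_smul_of_monotoneOn measurableSet_Ioc
    (fun s _ => (T.hasDerivAt_liftIso_symm hlam s).hasDerivWithinAt)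
    ((T.liftIso hlam).symm.monotone.monotoneOn (Ioc (T.F a) (T.F a + T.deg.toNat)))
    fun u : ℝ => ψ u
  rw [image_liftIso_symm_Ioc, AddCircle.integral_preimage] at this
  rw [this, intervalIntegral.integral_of_le (le_add_of_nonneg_right (Nat.cast_nonneg _))]
  rfl

lemma integrable_transfer {ψ : Circle1 → ℝ} (hψ : Integrable ψ) : Integrable (transfer T ψ) := by
  rw [integrable_iff_integrableOn_Ioc_coe _ (T.F 0),
    ← intervalIntegrable_iff_integrableOn_Ioc_of_le (le_add_of_nonneg_right zero_le_one)]
  simp only [T.transfer_coe hlam]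
  simpa only [Finset.sum_fn] using IntervalIntegrable.sum _ fun j hj =>
    intervalIntegrable_comp_add_natCast (T.integrableOn_liftDensity hlam hψ 0)
      (Finset.mem_range.1 hj)

lemma integral_transfer {ψ : Circle1 → ℝ} (hψ : Integrable ψ) :
    ∫ x, transfer T ψ x = ∫ x, ψ x := by
  rw [← AddCircle.intervalIntegral_preimage 1 (T.F 0)]
  simp only [T.transfer_coe hlam]
  rw [integral_sum_comp_add_natCast (T.integrableOn_liftDensity hlam hψ 0),
    T.integral_liftDensity hlam]

lemma logLipschitzOn_transfer {L a : ℝ} (hL : 0 ≤ L) {φ : Circle1 → ℝ}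
    (h : LogLipschitzOn L (fun u : ℝ => φ u) (Ioo a (a + 1))) :
    LogLipschitzOn ((Astar / lam + L) * lam⁻¹) (fun t : ℝ => transfer T φ t)
      (Ioo (T.F a) (T.F a + 1)) := by
  simp only [T.transfer_coe hlam, liftDensity]
  refine LogLipschitzOn.sum fun j hj => ?_
  have hdistortion : LogLipschitzOn (Astar / lam) (fun u => (deriv T.F u)⁻¹) (Ioo a (a + 1)) :=
    .inv_of_abs_sub_le hlam (fun x _ => T.expanding x) fun x _ y _ => T.abs_deriv_F_sub_le x y
  refine (hdistortion.mul h).comp (by have := T.Astar_nonneg; positivity) (fun t ht => ?_)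
    fun s _ t _ => by simpa using T.dist_liftIso_symm_le hlam (s + j) (t + j)
  have hjn : ((j + 1 : ℕ) : ℝ) ≤ T.deg.toNat := by exact_mod_cast Finset.mem_range.1 hj
  rw [natCast_toNat_deg T hlam] at hjn
  push_cast at hjn
  constructor <;> refine (T.strictMono_F hlam).lt_iff_lt.1 ?_
  · rw [F_liftIso_symm]
    linarith [ht.1, j.cast_nonneg (α := ℝ)]
  · rw [F_liftIso_symm, T.lift_add_one]
    linarith [ht.2]

end CM

/-- An integrable function on the circle of mass `m` that is log-Lipschitz with constant `L` on the
circle cut at some point `a`. The cut is described in the coordinate `(a, a + 1)`, so that a map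
with lift `F` simply moves it to `F a`; the mass is kept as a parameter so that mass can be removed
without renormalizing. -/
structure IsLogLipDensity (L m : ℝ) (φ : Circle1 → ℝ) : Prop where
  integrable : Integrable φ
  integral_eq : ∫ x, φ x = m
  exists_cut : ∃ a : ℝ, LogLipschitzOn L (fun u : ℝ => φ u) (Ioo a (a + 1))

lemma memD.isLogLipDensity {L : ℝ} {ψ : Circle1 → ℝ} (h : memD L ψ) : IsLogLipDensity L 1 ψ := by
  obtain ⟨⟨hint, hmass, -⟩, hpos, z, hlip⟩ := h
  exact ⟨hint, hmass, zrep z, .of_abs_log_sub_log_le (fun u _ => hpos u)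
    fun u hu v hv => hlip.abs_sub_le hu hv⟩

namespace IsLogLipDensity

variable {L M m : ℝ} {φ : Circle1 → ℝ}

lemma mono (h : IsLogLipDensity L m φ) (hLM : L ≤ M) : IsLogLipDensity M m φ :=
  ⟨h.integrable, h.integral_eq, h.exists_cut.imp fun _ ha => ha.mono hLM⟩

lemma ae_nonneg (h : IsLogLipDensity L m φ) : ∀ᵐ x, 0 ≤ φ x :=
  let ⟨_, ha⟩ := h.exists_cut
  ae_of_forall_mem_Ioo_coe ha.nonneg

protected lemma transfer {lam Astar : ℝ} (hlam : 0 < lam) (T : CM lam Astar) (hL : 0 ≤ L)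
    (h : IsLogLipDensity L m φ) :
    IsLogLipDensity ((Astar / lam + L) * lam⁻¹) m (transfer T φ) :=
  let ⟨_, ha⟩ := h.exists_cut
  ⟨T.integrable_transfer hlam h.integrable,
    (T.integral_transfer hlam h.integrable).trans h.integral_eq,
    _, T.logLipschitzOn_transfer hlam hL ha⟩

end IsLogLipDensity

/-- The fraction of its mass that an `L`-log-Lipschitz density can lose, as a constant function,
while remaining `M`-log-Lipschitz. -/
noncomputable def removableFraction (L M : ℝ) : ℝ := (1 - L / M) * Real.exp (-L)

lemma removableFraction_mem_Ioo {L M : ℝ} (hL : 0 < L) (hLM : L < M) :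
    removableFraction L M ∈ Ioo 0 1 := by
  have hM : 0 < M := hL.trans hLM
  have hratio : L / M < 1 := (div_lt_one hM).2 hLM
  refine ⟨mul_pos (sub_pos.2 hratio) (Real.exp_pos _), ?_⟩
  exact mul_lt_one_of_nonneg_of_lt_one_right (sub_le_self 1 (by positivity))
    (Real.exp_nonneg _) (Real.exp_lt_one_iff.2 (neg_lt_zero.2 hL))

lemma IsLogLipDensity.sub_removableFraction {L M m : ℝ} {φ : Circle1 → ℝ}
    (h : IsLogLipDensity L m φ) (hL : 0 ≤ L) (hLM : L < M) :
    IsLogLipDensity M ((1 - removableFraction L M) * m)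
      (fun x => φ x - removableFraction L M * m) := by
  obtain ⟨hint, hmass, a, ha⟩ := h
  refine ⟨hint.sub (integrable_const _), ?_, a, ha.sub_const hL hLM fun u hu => ?_⟩
  · rw [integral_sub hint (integrable_const _), hmass]
    simp [measureReal_def, AddCircle.measure_univ, one_sub_mul]
  · have hlower : Real.exp (-L) * m ≤ φ u := by
      rw [Real.exp_neg, inv_mul_le_iff₀ (Real.exp_pos L), ← hmass]
      exact ha.integral_le_exp_mul hL hu
    rw [removableFraction, mul_assoc]
    have := (div_le_one (hL.trans_lt hLM)).2 hLM.le
    exact mul_le_mul_of_nonneg_left hlower (sub_nonneg.2 this)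

/-- `h` is a difference of two `L`-log-Lipschitz densities of the same mass `m`. Removing the same
constant from both leaves `h` unchanged and lowers `m`, which bounds the `L¹` norm of `h`. -/
def IsLogLipDifference (L m : ℝ) (h : Circle1 → ℝ) : Prop :=
  ∃ φ₁ φ₂ : Circle1 → ℝ, IsLogLipDensity L m φ₁ ∧ IsLogLipDensity L m φ₂ ∧ h = φ₁ - φ₂

namespace IsLogLipDifference

variable {L M m : ℝ} {h : Circle1 → ℝ}

lemma mono (hh : IsLogLipDifference L m h) (hLM : L ≤ M) : IsLogLipDifference M m h :=
  let ⟨φ₁, φ₂, h₁, h₂, hsub⟩ := hh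
  ⟨φ₁, φ₂, h₁.mono hLM, h₂.mono hLM, hsub⟩

lemma l1norm_le (hh : IsLogLipDifference L m h) : l1norm h ≤ 2 * m := by
  obtain ⟨φ₁, φ₂, h₁, h₂, rfl⟩ := hh
  calc l1norm (φ₁ - φ₂) ≤ ∫ x, (φ₁ x + φ₂ x) := by
        refine integral_mono_ae (h₁.integrable.sub h₂.integrable).abs
          (h₁.integrable.add h₂.integrable) ?_
        filter_upwards [h₁.ae_nonneg, h₂.ae_nonneg] with x hx₁ hx₂
        exact abs_sub_le_of_nonneg_of_le hx₁ (le_add_of_nonneg_right hx₂) hx₂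
          (le_add_of_nonneg_left hx₁)
    _ = 2 * m := by
        rw [integral_add h₁.integrable h₂.integrable, h₁.integral_eq, h₂.integral_eq, two_mul]

protected lemma transfer {lam Astar : ℝ} (hlam : 0 < lam) (T : CM lam Astar) (hL : 0 ≤ L)
    (hh : IsLogLipDifference L m h) :
    IsLogLipDifference ((Astar / lam + L) * lam⁻¹) m (transfer T h) := by
  obtain ⟨φ₁, φ₂, h₁, h₂, rfl⟩ := hh
  exact ⟨_, _, h₁.transfer hlam T hL, h₂.transfer hlam T hL, T.transfer_sub hlam φ₁ φ₂⟩

lemma reduce_mass (hh : IsLogLipDifference L m h) (hL : 0 ≤ L) (hLM : L < M) :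
    IsLogLipDifference M ((1 - removableFraction L M) * m) h := by
  obtain ⟨φ₁, φ₂, h₁, h₂, rfl⟩ := hh
  refine ⟨_, _, h₁.sub_removableFraction hL hLM, h₂.sub_removableFraction hL hLM, ?_⟩
  ext x
  exact (sub_sub_sub_cancel_right _ _ _).symm

end IsLogLipDifference

/-- The fixed point of `L ↦ (Astar / lam + L) * lam⁻¹`, the effect of one transfer operator on
log-Lipschitz constants. -/
noncomputable def fixedLip (lam Astar : ℝ) : ℝ := Astar / (lam * (lam - 1))

lemma fixedLip_nonneg {lam Astar : ℝ} (hlam : 1 < lam) (hA : 0 ≤ Astar) : 0 ≤ fixedLip lam Astar :=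
  div_nonneg hA (mul_nonneg (by linarith) (by linarith))

/-- The loss factor of one step: the log-Lipschitz constant is relaxed from `fixedLip + 1` to
`fixedLip + lam`, which the next transfer operator brings back to `fixedLip + 1`. -/
noncomputable def memoryLossRate (lam Astar : ℝ) : ℝ :=
  1 - removableFraction (fixedLip lam Astar + 1) (fixedLip lam Astar + lam)

section Iteration

variable {lam Astar : ℝ} (hlam : 1 < lam)
include hlam

lemma memoryLossRate_mem_Ioo (hA : 0 ≤ Astar) : memoryLossRate lam Astar ∈ Ioo 0 1 := by
  have hfix := fixedLip_nonneg hlam hA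
  have hκ := removableFraction_mem_Ioo (L := fixedLip lam Astar + 1)
    (M := fixedLip lam Astar + lam) (by linarith) (by linarith)
  exact ⟨sub_pos.2 hκ.2, sub_lt_self 1 hκ.1⟩

namespace IsLogLipDifference

variable {m ε : ℝ} {h : Circle1 → ℝ}

lemma transfer_fixedLip_add (T : CM lam Astar) (hε : 0 ≤ ε)
    (hh : IsLogLipDifference (fixedLip lam Astar + ε) m h) :
    IsLogLipDifference (fixedLip lam Astar + ε / lam) m (transfer T h) := by
  have hstep : (Astar / lam + (fixedLip lam Astar + ε)) * lam⁻¹ = fixedLip lam Astar + ε / lam := by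
    have : lam - 1 ≠ 0 := by linarith
    rw [fixedLip]
    field_simp
    ring
  rw [← hstep]
  exact hh.transfer (by linarith) T (add_nonneg (fixedLip_nonneg hlam T.Astar_nonneg) hε)

lemma contract (T : CM lam Astar) (hh : IsLogLipDifference (fixedLip lam Astar + 1) m h) :
    IsLogLipDifference (fixedLip lam Astar + 1) (memoryLossRate lam Astar * m)
      (transfer T h) := by
  have hfix := fixedLip_nonneg hlam T.Astar_nonneg
  have hreduced := hh.reduce_mass (M := fixedLip lam Astar + lam) (by linarith) (by linarith)
  have := hreduced.transfer_fixedLip_add hlam T (by linarith)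
  rwa [div_self (by linarith : lam ≠ 0)] at this

variable (Ts : ℕ → CM lam Astar)

protected lemma transferIter (hε : 0 ≤ ε)
    (hh : IsLogLipDifference (fixedLip lam Astar + ε) m h) (k : ℕ) :
    IsLogLipDifference (fixedLip lam Astar + ε / lam ^ k) m (transferIter Ts k h) := by
  induction k with
  | zero => simpa [transferIter] using hh
  | succ k ih =>
    rw [pow_succ, ← div_div]
    exact ih.transfer_fixedLip_add hlam _ (by positivity)

lemma contract_transferIter {n : ℕ}
    (hh : IsLogLipDifference (fixedLip lam Astar + 1) m (transferIter Ts n h)) (j : ℕ) :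
    IsLogLipDifference (fixedLip lam Astar + 1) (memoryLossRate lam Astar ^ j * m)
      (transferIter Ts (n + j) h) := by
  induction j with
  | zero => simpa using hh
  | succ j ih =>
    rw [pow_succ', mul_assoc]
    exact ih.contract hlam _

lemma l1norm_transferIter_le {n : ℕ} (hε : 0 ≤ ε) (hn : ε ≤ lam ^ n)
    (hh : IsLogLipDifference (fixedLip lam Astar + ε) m h) (k : ℕ) :
    l1norm (transferIter Ts k h) ≤ 2 * (memoryLossRate lam Astar ^ (k - n) * m) := by
  have relaxed := hh.transferIter hlam Ts hε
  rcases le_total k n with hkn | hnk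
  · simpa [Nat.sub_eq_zero_of_le hkn] using (relaxed k).l1norm_le
  · obtain ⟨j, rfl⟩ := Nat.exists_eq_add_of_le hnk
    have hentry : ε / lam ^ n ≤ 1 := (div_le_one (by positivity)).2 hn
    have := (relaxed n).mono (add_le_add_right hentry _)
    simpa using (this.contract_transferIter hlam Ts j).l1norm_le

end IsLogLipDifference

end Iteration

/-- Lemma `lem:memory_loss`.  Exponential memory loss: there is
`ϑ ∈ (0,1)` (depending only on `λ, A*`) such that for every `L > 0` there is `C > 0` with
`‖ℒ_k⋯ℒ_1(ψ¹ − ψ²)‖_{L¹(𝔪)} ≤ Cϑᵏ` for all `ψ¹, ψ² ∈ 𝒟_L`, all sequences of maps of `𝓜`,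
and all `k ≥ 0`. -/
theorem statement4 {lam Astar : ℝ} (hlam : 1 < lam) (hA : 0 < Astar) :
    ∃ θ : ℝ, θ ∈ Set.Ioo (0 : ℝ) 1 ∧
      ∀ L : ℝ, 0 < L → ∃ C : ℝ, 0 < C ∧
        ∀ (Ts : ℕ → CM lam Astar) (ψ₁ ψ₂ : Circle1 → ℝ), memD L ψ₁ → memD L ψ₂ →
          ∀ k : ℕ, l1norm (transferIter Ts k (fun x => ψ₁ x - ψ₂ x)) ≤ C * θ ^ k := by
  obtain ⟨hθ₀, hθ₁⟩ := memoryLossRate_mem_Ioo hlam hA.le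
  set θ := memoryLossRate lam Astar
  refine ⟨θ, ⟨hθ₀, hθ₁⟩, fun L hL => ?_⟩
  obtain ⟨n, hn⟩ := pow_unbounded_of_one_lt L hlam
  refine ⟨2 / θ ^ n, by positivity, fun Ts ψ₁ ψ₂ hψ₁ hψ₂ k => ?_⟩
  have hdiff : IsLogLipDifference (fixedLip lam Astar + L) 1 (fun x => ψ₁ x - ψ₂ x) :=
    IsLogLipDifference.mono ⟨ψ₁, ψ₂, hψ₁.isLogLipDensity, hψ₂.isLogLipDensity, rfl⟩
      (le_add_of_nonneg_left (fixedLip_nonneg hlam hA.le))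
  calc l1norm (transferIter Ts k fun x => ψ₁ x - ψ₂ x) ≤ 2 * (θ ^ (k - n) * 1) :=
        hdiff.l1norm_transferIter_le hlam Ts hL.le hn.le k
    _ = 2 / θ ^ n * θ ^ (k - n + n) := by rw [pow_add]; field_simp
    _ ≤ 2 / θ ^ n * θ ^ k := by
        gcongr ?_ * ?_
        exact pow_le_pow_of_le_one hθ₀.le hθ₁.le le_tsub_add
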